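/- Let F be an element of the (extended) Selberg class with data (m, k, ε, Q, λ_j, μ_j), with Dirichlet coefficients (a_n), and let Ξ_F(z) = ξ_F(1/2 + iz). Then Ξ_F is integrable on ℝ and for every real x, ∫_{-∞}^{∞} Ξ_F(z) e^{-ixz} dz = ε Q^{1/2} ∑_{n=1}^∞ (a_n / n^{1/2}) ∫_{-∞}^{∞} (1/4 + z²)^m (∏_{j=1}^k Γ(iλ_j z + μ_j + λ_j/2)) · (n e^{x} / Q)^{−iz} dz, where the sum over n converges absolutely. -/

import Mathlib

open Filter Finset MeasureTheory

/-- An element of the (extended) Selberg class, with data `(m, k, ε, Q, λⱼ, μⱼ)`,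
Dirichlet coefficients `a`, the `L`-function `F` and the completed function `xi`.
`F(s) = ∑ aₙ n^{−s}` converges (absolutely, as we are in `ℂ`) for `Re s > 1` with `a₁ = 1`
and `aₙ = O(n^δ)`; `(s−1)^m F(s)` extends to an entire function of order 1;
`|ε| = 1`, `Q > 0`, `λⱼ > 0`, `Re μⱼ ≥ 0`; the completed function
`ξ(s) = s^m (1−s)^m ε Q^s (∏ Γ(λⱼ s + μⱼ)) F(s)` is entire and satisfies the
functional equation `ξ(s) = conj(ξ(1 − conj s))`. -/
structure SelbergClass where
  m : ℕ
  k : ℕ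
  eps : ℂ
  Q : ℝ
  lam : Fin k → ℝ
  mu : Fin k → ℂ
  a : ℕ → ℂ
  F : ℂ → ℂ
  xi : ℂ → ℂ
  hk : 1 ≤ k
  heps : ‖eps‖ = 1
  hQ : 0 < Q
  hlam : ∀ j, 0 < lam j
  hmu : ∀ j, 0 ≤ (mu j).re
  ha_one : a 1 = 1
  ha_growth : ∃ δ : ℝ, 0 < δ ∧ ∃ K : ℝ, ∀ n : ℕ, 1 ≤ n → ‖a n‖ ≤ K * (n : ℝ) ^ δ
  hFseries : ∀ s : ℂ, 1 < s.re →
    HasSum (fun n : ℕ => a (n + 1) * ((n : ℂ) + 1) ^ (-s)) (F s)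
  hmero : ∃ G : ℂ → ℂ, Differentiable ℂ G ∧
    (∀ s : ℂ, s ≠ 1 → G s = (s - 1) ^ m * F s) ∧
    ∀ η : ℝ, 0 < η → ∃ C : ℝ, ∀ s : ℂ, ‖G s‖ ≤ C * Real.exp (‖s‖ ^ (1 + η))
  hxi_entire : Differentiable ℂ xi
  hxi_eq : ∀ s : ℂ, 1 < s.re → xi s =
    s ^ m * (1 - s) ^ m * eps * (Q : ℂ) ^ s *
      (∏ j, Complex.Gamma ((lam j : ℂ) * s + mu j)) * F s
  hfe : ∀ s : ℂ, xi s = starRingEnd ℂ (xi (1 - starRingEnd ℂ s))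

/-! On `s = 1/2 + iz` the left integral is, up to the factor `2π e^{x/2}`, the inverse Mellin
transform of `ξ_F` along `Re s = 1/2` at the point `e^x`. On a line `Re s = σ > 1` the Gamma factors
decay rapidly and the Dirichlet series is bounded; by the functional equation `ξ_F` also decays
rapidly on `Re s = 1 - σ`, and since `ξ_F` has finite order the Phragmén–Lindelöf principle extends
the decay to the strip in between. Hence the contour may be moved to `Re s = 2`, where the Dirichlet
series converges absolutely and can be integrated term by term, and then each term, which has no
pole in `Re s > 0`, may be moved back to `Re s = 1/2`. -/

section VerticalStrip

open Complex Asymptotics Topology Complex.HadamardThreeLines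

variable {E : Type*} [NormedAddCommGroup E]

/-- The filter of neighbourhoods of `i∞` and `-i∞` in the closed strip `a ≤ Re s ≤ b`. -/
def verticalStripInfty (a b : ℝ) : Filter ℂ :=
  comap (fun s : ℂ => |s.im|) atTop ⊓ 𝓟 (verticalClosedStrip a b)

lemma preimage_re_singleton_subset_verticalClosedStrip {a b σ : ℝ} (hσ : σ ∈ Set.Icc a b) :
    re ⁻¹' {σ} ⊆ verticalClosedStrip a b :=
  Set.preimage_mono (Set.singleton_subset_iff.2 hσ)

lemma tendsto_abs_im_verticalStripInfty (a b : ℝ) :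
    Tendsto (fun s : ℂ => |s.im|) (verticalStripInfty a b) atTop :=
  tendsto_comap.mono_left inf_le_left

lemma verticalStripInfty_le_principal (a b : ℝ) :
    verticalStripInfty a b ≤ 𝓟 (verticalClosedStrip a b) :=
  inf_le_right

lemma verticalStripInfty_eq_sup {a b c : ℝ} (hab : a ≤ b) (hbc : b ≤ c) :
    verticalStripInfty a c = verticalStripInfty a b ⊔ verticalStripInfty b c := by
  simp only [verticalStripInfty, verticalClosedStrip, ← inf_sup_left, sup_principal,
    ← Set.preimage_union, Set.Icc_union_Icc_eq_Icc hab hbc]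

lemma tendsto_one_sub_conj_verticalStripInfty (a b : ℝ) :
    Tendsto (fun s : ℂ => 1 - starRingEnd ℂ s) (verticalStripInfty (1 - b) (1 - a))
      (verticalStripInfty a b) := by
  refine tendsto_inf.2 ⟨tendsto_comap_iff.2 ?_, tendsto_principal.2 ?_⟩
  · simpa [Function.comp_def] using tendsto_abs_im_verticalStripInfty (1 - b) (1 - a)
  · filter_upwards [verticalStripInfty_le_principal _ _ (mem_principal_self _)] with s hs
    exact ⟨by simpa using le_sub_comm.1 hs.2, by simpa using sub_le_comm.1 hs.1⟩

lemma isBigO_add_const_verticalClosedStrip (a b : ℝ) (w : ℂ) :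
    (fun s : ℂ => s + w) =O[𝓟 (verticalClosedStrip a b)] fun s => 1 + |s.im| := by
  refine isBigO_principal.2 ⟨max |a| |b| + ‖w‖ + 1, fun s hs => ?_⟩
  have hre : |s.re| ≤ max |a| |b| := abs_le_max_abs_abs hs.1 hs.2
  have hmax : 0 ≤ max |a| |b| := (abs_nonneg _).trans hre
  rw [Real.norm_of_nonneg (by positivity)]
  calc ‖s + w‖ ≤ |s.re| + |s.im| + ‖w‖ :=
        (norm_add_le s w).trans (by gcongr; exact norm_le_abs_re_add_abs_im s)
    _ ≤ (max |a| |b| + ‖w‖ + 1) * (1 + |s.im|) := by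
        nlinarith [abs_nonneg s.im, norm_nonneg w]

lemma isBigO_inv_add_const {a : ℝ} {w : ℂ} (hw : 0 < a + w.re) :
    (fun s : ℂ => (s + w)⁻¹) =O[𝓟 {s | a ≤ s.re}] fun s => (1 + |s.im|)⁻¹ := by
  refine IsBigO.inv_rev (isBigO_principal.2 ⟨1 + (1 + |w.im|) / (a + w.re), fun s hs => ?_⟩)
    (Eventually.of_forall fun s hs => absurd hs (by positivity))
  have hre : a + w.re ≤ ‖s + w‖ :=
    (add_le_add_left (show a ≤ s.re from hs) _).trans (re_le_norm (s + w))
  have him : |s.im| ≤ ‖s + w‖ + |w.im| :=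
    calc |s.im| = |(s + w).im - w.im| := by simp
      _ ≤ |(s + w).im| + |w.im| := abs_sub _ _
      _ ≤ ‖s + w‖ + |w.im| := by gcongr; exact abs_im_le_norm _
  have hconst : 1 + |w.im| ≤ (1 + |w.im|) / (a + w.re) * ‖s + w‖ := by
    rw [div_mul_eq_mul_div, le_div_iff₀ hw]
    gcongr
  rw [Real.norm_of_nonneg (by positivity)]
  linarith

lemma isLittleO_add_const_pow_exp_abs_im (a b : ℝ) (w : ℂ) (N : ℕ) {c : ℝ} (hc : 0 < c) :
    (fun s : ℂ => (s + w) ^ N) =o[verticalStripInfty a b] fun s => Real.exp (c * |s.im|) := by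
  have hpoly : (fun s : ℂ => (s + w) ^ N) =O[verticalStripInfty a b] fun s => (1 + |s.im|) ^ N :=
    ((isBigO_add_const_verticalClosedStrip a b w).pow N).mono (verticalStripInfty_le_principal a b)
  have hexp : (fun s : ℂ => (1 + |s.im|) ^ N) =o[verticalStripInfty a b]
      fun s => Real.exp (c * (1 + |s.im|)) :=
    (isLittleO_pow_exp_pos_mul_atTop N hc).comp_tendsto
      (tendsto_atTop_add_const_left _ 1 (tendsto_abs_im_verticalStripInfty a b))
  simp only [mul_add, Real.exp_add] at hexp
  exact hpoly.trans_isLittleO (hexp.trans_isBigO (isBigO_const_mul_self _ _ _))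

lemma isBigO_exp_norm_pow_exp_exp_abs_im (a b : ℝ) (N : ℕ) {c : ℝ} (hc : 0 < c) :
    (fun s : ℂ => Real.exp (‖s‖ ^ N)) =O[verticalStripInfty a b]
      fun s => Real.exp (Real.exp (c * |s.im|)) := by
  refine IsBigO.of_bound 1 ?_
  filter_upwards [(isLittleO_add_const_pow_exp_abs_im a b 0 N hc).bound one_pos] with s hs
  simpa only [add_zero, norm_pow, one_mul, Real.norm_eq_abs, Real.abs_exp, Real.exp_le_exp] using hs

lemma isBigO_cpow_verticalClosedStrip {t : ℝ} (ht : 0 < t) (a b : ℝ) :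
    (fun s : ℂ => (t : ℂ) ^ s) =O[𝓟 (verticalClosedStrip a b)] fun _ => (1 : ℝ) := by
  have hIcc : (fun x : ℝ => t ^ x) =O[𝓟 (Set.Icc a b)] fun _ => (1 : ℝ) :=
    (Real.continuous_const_rpow ht.ne').continuousOn.isBigO_principal isCompact_Icc (by simp)
  refine IsBigO.of_norm_left ?_
  simp only [norm_cpow_eq_rpow_re_of_pos ht]
  exact hIcc.comp_tendsto (Set.mapsTo_preimage re _).tendsto

/-- Decay faster than every power of `|Im s|`, uniformly for `s ∈ S`. The weight `1 + |Im s|` rather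
than `‖s‖` is used because it is bounded below and `S` is usually a vertical strip. -/
def IsRapidlyDecreasingOn (f : ℂ → E) (S : Set ℂ) : Prop :=
  ∀ N : ℕ, f =O[𝓟 S] fun s => ((1 + |s.im|) ^ N)⁻¹

namespace IsRapidlyDecreasingOn

variable {f : ℂ → E} {S T : Set ℂ}

lemma mono (hf : IsRapidlyDecreasingOn f S) (hTS : T ⊆ S) : IsRapidlyDecreasingOn f T :=
  fun N => (hf N).mono (principal_mono.2 hTS)

lemma isBigO_one (hf : IsRapidlyDecreasingOn f S) : f =O[𝓟 S] fun _ => (1 : ℝ) := by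
  simpa using hf 0

lemma comp_affine (hf : IsRapidlyDecreasingOn f S) {l : ℝ} (hl : 0 < l) (w : ℂ)
    (hTS : Set.MapsTo (fun s : ℂ => l * s + w) T S) :
    IsRapidlyDecreasingOn (fun s => f (l * s + w)) T := by
  have hweight : (fun s : ℂ => 1 + |s.im|) =O[𝓟 T] fun s => 1 + |(l * s + w).im| := by
    refine isBigO_principal.2 ⟨1 + (1 + |w.im|) / l, fun s _ => ?_⟩
    have him : l * |s.im| ≤ |(l * s + w).im| + |w.im| := by
      simpa [abs_mul, abs_of_pos hl] using abs_sub (l * s + w).im w.im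
    rw [Real.norm_of_nonneg (by positivity), Real.norm_of_nonneg (by positivity)]
    have hscale : |s.im| ≤ (1 + |w.im|) / l * (1 + |(l * s + w).im|) := by
      rw [div_mul_eq_mul_div, le_div_iff₀' hl]
      nlinarith [mul_nonneg (abs_nonneg w.im) (abs_nonneg (l * s + w).im)]
    nlinarith [abs_nonneg (l * s + w).im]
  intro N
  refine ((hf N).comp_tendsto hTS.tendsto).trans ((hweight.pow N).inv_rev ?_)
  exact Eventually.of_forall fun s hs => absurd hs (by positivity)

lemma tendsto_zero {a b : ℝ} (hf : IsRapidlyDecreasingOn f (verticalClosedStrip a b)) :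
    Tendsto f (verticalStripInfty a b) (𝓝 0) := by
  refine ((hf 1).mono (verticalStripInfty_le_principal a b)).trans_tendsto ?_
  simp only [pow_one]
  exact (tendsto_atTop_add_const_left _ 1 (tendsto_abs_im_verticalStripInfty a b)).inv_tendsto_atTop

lemma verticalIntegrable (hf : IsRapidlyDecreasingOn f S) (hc : ContinuousOn f S) {σ : ℝ}
    (hσ : re ⁻¹' {σ} ⊆ S) : VerticalIntegrable f σ := by
  have hline : ∀ y : ℝ, (σ + y * I : ℂ) ∈ S := fun y => hσ (by simp)
  have hcont : Continuous fun y : ℝ => f (σ + y * I) :=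
    hc.comp_continuous (by fun_prop) hline
  obtain ⟨C, hC⟩ := isBigO_principal.1 (hf 2)
  refine ((integrable_inv_one_add_sq.const_mul |C|).mono' hcont.aestronglyMeasurable
    (ae_of_all _ fun y => (hC _ (hline y)).trans ?_))
  rw [Real.norm_of_nonneg (by positivity)]
  have him : (σ + y * I : ℂ).im = y := by simp
  rw [him]
  gcongr
  · exact le_abs_self C
  · nlinarith [abs_nonneg y, sq_abs y]

variable [NormedSpace ℂ E]

lemma smul_of_isBigO_pow (hf : IsRapidlyDecreasingOn f S) {g : ℂ → ℂ} {k : ℕ}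
    (hg : g =O[𝓟 S] fun s => (1 + |s.im|) ^ k) : IsRapidlyDecreasingOn (fun s => g s • f s) S := by
  intro N
  refine (hg.smul (hf (N + k))).congr_right fun s => ?_
  have : 1 + |s.im| ≠ 0 := by positivity
  rw [smul_eq_mul, pow_add]
  field_simp

lemma smul_of_isBigO_one (hf : IsRapidlyDecreasingOn f S) {g : ℂ → ℂ}
    (hg : g =O[𝓟 S] fun _ => (1 : ℝ)) : IsRapidlyDecreasingOn (fun s => g s • f s) S :=
  hf.smul_of_isBigO_pow (k := 0) (by simpa using hg)

end IsRapidlyDecreasingOn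

variable [NormedSpace ℂ E]

lemma isBigO_add_const_pow_smul_exp_exp {f : ℂ → E} {a b B c c' : ℝ} (w : ℂ) (N : ℕ)
    (hcc' : c < c') (hc' : 0 < c')
    (hf : f =O[verticalStripInfty a b] fun s => Real.exp (B * Real.exp (c * |s.im|))) :
    (fun s => (s + w) ^ N • f s) =O[verticalStripInfty a b]
      fun s => Real.exp ((1 + |B|) * Real.exp (c' * |s.im|)) := by
  refine ((isLittleO_add_const_pow_exp_abs_im a b w N hc').isBigO.smul hf).trans
    (isBigO_of_le _ fun s => ?_)
  rw [smul_eq_mul, ← Real.exp_add, Real.norm_eq_abs, Real.norm_eq_abs, Real.abs_exp, Real.abs_exp,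
    Real.exp_le_exp, add_mul, one_mul]
  refine add_le_add ((lt_add_one _).le.trans (Real.add_one_le_exp _)) ?_
  gcongr
  exact le_abs_self B

lemma isBigO_inv_pow_of_add_const_pow_smul {f : ℂ → E} {a b : ℝ} {w : ℂ} (hw : 0 < a + w.re) {N : ℕ}
    (hf : (fun s => (s + w) ^ N • f s) =O[𝓟 (verticalClosedStrip a b)] fun _ => (1 : ℝ)) :
    f =O[𝓟 (verticalClosedStrip a b)] fun s => ((1 + |s.im|) ^ N)⁻¹ := by
  have hinv : (fun s : ℂ => ((s + w)⁻¹) ^ N) =O[𝓟 (verticalClosedStrip a b)]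
      fun s => ((1 + |s.im|)⁻¹) ^ N :=
    ((isBigO_inv_add_const hw).mono (principal_mono.2 fun s hs => hs.1)).pow N
  simp only [inv_pow] at hinv
  refine (hinv.smul hf).congr' ?_ (by simp)
  filter_upwards [mem_principal_self _] with s hs
  have hne : s + w ≠ 0 := fun h => by
    have := congrArg re h
    rw [add_re, zero_re] at this
    linarith [hs.1]
  exact inv_smul_smul₀ (pow_ne_zero N hne) (f s)

-- Multiplying by a power of `s - a + 1`, which has no zero in the strip, reduces decay at the rate
-- `N` to boundedness.
theorem isRapidlyDecreasingOn_verticalClosedStrip_of_edges {f : ℂ → E} {a b : ℝ} (hab : a < b)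
    (hfd : DiffContOnCl ℂ f (re ⁻¹' Set.Ioo a b))
    (hgrowth : ∃ c < Real.pi / (b - a), ∃ B,
      f =O[verticalStripInfty a b] fun s => Real.exp (B * Real.exp (c * |s.im|)))
    (ha : IsRapidlyDecreasingOn f (re ⁻¹' {a})) (hb : IsRapidlyDecreasingOn f (re ⁻¹' {b})) :
    IsRapidlyDecreasingOn f (verticalClosedStrip a b) := by
  intro N
  obtain ⟨c, hc, B, hB⟩ := hgrowth
  obtain ⟨c', hcc', hc'⟩ :=
    exists_between (max_lt hc (div_pos Real.pi_pos (sub_pos.2 hab)))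
  set w : ℂ := ((1 - a : ℝ) : ℂ)
  have hedge : ∀ σ ∈ Set.Icc a b, IsRapidlyDecreasingOn f (re ⁻¹' {σ}) →
      ∃ C, ∀ s : ℂ, s.re = σ → ‖(s + w) ^ N • f s‖ ≤ C := by
    intro σ hσ hf
    have hpow : (fun s : ℂ => (s + w) ^ N) =O[𝓟 (re ⁻¹' {σ})] fun s => (1 + |s.im|) ^ N :=
      ((isBigO_add_const_verticalClosedStrip a b w).pow N).mono
        (principal_mono.2 (preimage_re_singleton_subset_verticalClosedStrip hσ))
    obtain ⟨C, hC⟩ := isBigO_principal.1 (hf.smul_of_isBigO_pow hpow).isBigO_one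
    exact ⟨C, fun s hs => by simpa using hC s hs⟩
  obtain ⟨Ca, hCa⟩ := hedge a (Set.left_mem_Icc.2 hab.le) ha
  obtain ⟨Cb, hCb⟩ := hedge b (Set.right_mem_Icc.2 hab.le) hb
  have hgrowth' : (fun s => (s + w) ^ N • f s) =O[verticalStripInfty a b]
      fun s => Real.exp ((1 + |B|) * Real.exp (c' * |s.im|)) :=
    isBigO_add_const_pow_smul_exp_exp w N ((le_max_left _ _).trans_lt hcc')
      ((le_max_right _ _).trans_lt hcc') hB
  have hdiff : DiffContOnCl ℂ (fun s => (s + w) ^ N • f s) (re ⁻¹' Set.Ioo a b) :=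
    (Differentiable.diffContOnCl (by fun_prop)).smul hfd
  refine isBigO_inv_pow_of_add_const_pow_smul (w := w) (by simp [w])
    (isBigO_principal.2 ⟨max Ca Cb, fun s hs => ?_⟩)
  rw [norm_one, mul_one]
  exact PhragmenLindelof.vertical_strip (f := fun s => (s + w) ^ N • f s) hdiff
    ⟨c', hc', _, hgrowth'.mono (inf_le_inf_left _
      (principal_mono.2 (Set.preimage_mono Set.Ioo_subset_Icc_self)))⟩
    (fun s hs => (hCa s hs).trans (le_max_left _ _))
    (fun s hs => (hCb s hs).trans (le_max_right _ _)) hs.1 hs.2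

end VerticalStrip

section ContourShift

open Complex Asymptotics Topology Complex.HadamardThreeLines

variable {E : Type*} [NormedAddCommGroup E] [NormedSpace ℂ E] {f : ℂ → E} {a b : ℝ}

lemma tendsto_integral_horizontal_segment (hab : a ≤ b)
    (hf : Tendsto f (verticalStripInfty a b) (𝓝 0)) :
    Tendsto (fun y : ℝ => ∫ x in a..b, f (x + y * I)) (comap (fun y : ℝ => |y|) atTop) (𝓝 0) := by
  rw [NormedAddGroup.tendsto_nhds_zero] at hf ⊢
  intro ε hε
  obtain ⟨R, hR⟩ : ∃ R, ∀ s ∈ verticalClosedStrip a b, R ≤ |s.im| → ‖f s‖ < ε / (b - a + 1) := by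
    have h := hf (ε / (b - a + 1)) (div_pos hε (by linarith))
    rw [verticalStripInfty, eventually_inf_principal, eventually_comap] at h
    obtain ⟨R, hR⟩ := eventually_atTop.1 h
    exact ⟨R, fun s hs hsR => hR _ hsR s rfl hs⟩
  filter_upwards [preimage_mem_comap (Ici_mem_atTop R)] with y hy
  have hbound : ∀ x ∈ Set.uIoc a b, ‖f (x + y * I)‖ ≤ ε / (b - a + 1) := by
    intro x hx
    rw [Set.uIoc_of_le hab] at hx
    exact (hR _ (by simpa [verticalClosedStrip] using Set.Ioc_subset_Icc_self hx)
      (by simpa using hy)).le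
  calc ‖∫ x in a..b, f (x + y * I)‖ ≤ ε / (b - a + 1) * |b - a| :=
        intervalIntegral.norm_integral_le_of_norm_le_const hbound
    _ < ε := by
        rw [abs_of_nonneg (sub_nonneg.2 hab), div_mul_eq_mul_div, div_lt_iff₀ (by linarith)]
        gcongr
        exact lt_add_one _

theorem integral_vertical_line_eq_of_tendsto_zero (hab : a ≤ b)
    (hc : ContinuousOn f (verticalClosedStrip a b))
    (hd : DifferentiableOn ℂ f (verticalStrip a b))
    (ha : VerticalIntegrable f a) (hb : VerticalIntegrable f b)
    (h0 : Tendsto f (verticalStripInfty a b) (𝓝 0)) :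
    ∫ y : ℝ, f (a + y * I) = ∫ y : ℝ, f (b + y * I) := by
  have hrect : ∀ T : ℝ, (∫ x in a..b, f (x + (-T : ℝ) * I)) - (∫ x in a..b, f (x + T * I)) +
      I • (∫ y in (-T)..T, f (b + y * I)) - I • ∫ y in (-T)..T, f (a + y * I) = 0 := by
    intro T
    refine integral_boundary_rect_eq_zero_of_continuousOn_of_differentiableOn f ⟨a, -T⟩ ⟨b, T⟩
      (hc.mono fun s hs => ?_) (hd.mono fun s hs => ?_)
    · simpa [verticalClosedStrip, Set.uIcc_of_le hab] using hs.1
    · simpa [verticalStrip, hab] using hs.1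
  have hhor := tendsto_integral_horizontal_segment hab h0
  rw [comap_abs_atTop] at hhor
  have hbot := (hhor.mono_left le_sup_left).comp tendsto_neg_atTop_atBot
  have htop := hhor.mono_left le_sup_right
  have hvert : ∀ {σ : ℝ}, VerticalIntegrable f σ → Tendsto
      (fun T : ℝ => ∫ y in (-T)..T, f (σ + y * I)) atTop (𝓝 (∫ y : ℝ, f (σ + y * I))) :=
    fun h => intervalIntegral_tendsto_integral h tendsto_neg_atTop_atBot tendsto_id
  have hlim := ((hbot.sub htop).add ((hvert hb).const_smul I)).sub ((hvert ha).const_smul I)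
  have hzero := tendsto_nhds_unique (hlim.congr hrect) tendsto_const_nhds
  rw [sub_self, zero_add, sub_eq_zero] at hzero
  exact (smul_right_injective E I_ne_zero hzero).symm

lemma isBigO_cpow_neg_verticalClosedStrip {t : ℝ} (ht : 0 < t) (a b : ℝ) :
    (fun s : ℂ => (t : ℂ) ^ (-s)) =O[𝓟 (verticalClosedStrip a b)] fun _ => (1 : ℝ) := by
  refine (isBigO_cpow_verticalClosedStrip ht (-b) (-a)).comp_tendsto
    (Set.MapsTo.tendsto fun s hs => ?_)
  exact ⟨by simpa using hs.2, by simpa using hs.1⟩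

theorem mellinInv_eq_mellinInv_of_isRapidlyDecreasingOn (hab : a ≤ b)
    (hd : DifferentiableOn ℂ f (verticalClosedStrip a b))
    (hf : IsRapidlyDecreasingOn f (verticalClosedStrip a b)) {t : ℝ} (ht : 0 < t) :
    mellinInv a f t = mellinInv b f t := by
  have hg : IsRapidlyDecreasingOn (fun s => (t : ℂ) ^ (-s) • f s) (verticalClosedStrip a b) :=
    hf.smul_of_isBigO_one (isBigO_cpow_neg_verticalClosedStrip ht a b)
  have hgd : DifferentiableOn ℂ (fun s => (t : ℂ) ^ (-s) • f s) (verticalClosedStrip a b) :=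
    (differentiable_neg.const_cpow (Or.inl (ofReal_ne_zero.2 ht.ne'))).differentiableOn.smul hd
  have hline : ∀ σ ∈ Set.Icc a b, VerticalIntegrable (fun s => (t : ℂ) ^ (-s) • f s) σ :=
    fun σ hσ => hg.verticalIntegrable hgd.continuousOn
      (preimage_re_singleton_subset_verticalClosedStrip hσ)
  rw [mellinInv, mellinInv, integral_vertical_line_eq_of_tendsto_zero hab hgd.continuousOn
    (hgd.mono (Set.preimage_mono Set.Ioo_subset_Icc_self)) (hline a (Set.left_mem_Icc.2 hab))
    (hline b (Set.right_mem_Icc.2 hab)) hg.tendsto_zero]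

lemma integral_smul_cpow_neg_I_mul_eq_mellinInv (f : ℂ → E) (σ : ℝ) {t : ℝ} (ht : 0 < t) :
    ∫ z : ℝ, (t : ℂ) ^ (-(I * z)) • f (σ + I * z) =
      (2 * Real.pi * t ^ (σ : ℂ) : ℂ) • mellinInv σ f t := by
  have hsplit : ∀ z : ℝ, (t : ℂ) ^ (-(I * z)) • f (σ + I * z) =
      (t : ℂ) ^ (σ : ℂ) • (t : ℂ) ^ (-(σ + z * I : ℂ)) • f (σ + z * I) := fun z => by
    rw [smul_smul, ← cpow_add _ _ (ofReal_ne_zero.2 ht.ne')]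
    ring_nf
  have hpi : (2 * Real.pi : ℝ) ≠ 0 := by positivity
  rw [mellinInv, integral_congr_ae (ae_of_all _ hsplit), integral_smul, mul_comm, mul_smul,
    ← ofReal_ofNat, ← ofReal_mul, Complex.coe_smul, smul_smul, mul_one_div_cancel hpi, one_smul]

lemma integral_mul_exp_neg_I_mul_eq_mellinInv (f : ℂ → ℂ) (σ x : ℝ) :
    ∫ z : ℝ, f (σ + I * z) * exp (-(I * x * z)) =
      2 * Real.pi * (Real.exp x : ℂ) ^ (σ : ℂ) * mellinInv σ f (Real.exp x) := by
  have hexp : ∀ z : ℝ, (Real.exp x : ℂ) ^ (-(I * z)) = exp (-(I * x * z)) := fun z => by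
    rw [cpow_def_of_ne_zero (ofReal_ne_zero.2 (Real.exp_pos x).ne'), ← ofReal_log
      (Real.exp_pos x).le, Real.log_exp]
    ring_nf
  simpa only [hexp, smul_eq_mul, mul_comm (exp _)] using
    integral_smul_cpow_neg_I_mul_eq_mellinInv f σ (Real.exp_pos x)

lemma verticalIntegrable_cpow_neg_smul {σ : ℝ} (hf : VerticalIntegrable f σ) {t : ℝ} (ht : 0 < t) :
    VerticalIntegrable (fun s => (t : ℂ) ^ (-s) • f s) σ := by
  have hcont : Continuous fun y : ℝ => (t : ℂ) ^ (-(σ + y * I : ℂ)) :=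
    continuous_const.cpow (by fun_prop) fun _ => ofReal_mem_slitPlane.2 ht
  refine Integrable.bdd_smul hf (t ^ (-σ)) hcont.aestronglyMeasurable (ae_of_all _ fun y => ?_)
  simp [norm_cpow_eq_rpow_re_of_pos ht]

end ContourShift

section GeneralDirichletSeries

open Complex Asymptotics

variable {ι : Type*} {c : ι → ℂ} {r : ι → ℝ} {L : ℂ → ℂ} {σ : ℝ}

lemma isBigO_one_vertical_line_of_hasSum (hr : ∀ i, 0 < r i)
    (hL : ∀ s : ℂ, s.re = σ → HasSum (fun i => c i * (r i : ℂ) ^ (-s)) (L s)) :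
    L =O[𝓟 (re ⁻¹' {σ})] fun _ => (1 : ℝ) := by
  have hnorm : ∀ s : ℂ, s.re = σ → ∀ i,
      ‖c i * (r i : ℂ) ^ (-s)‖ = ‖c i * (r i : ℂ) ^ (-(σ : ℂ))‖ := fun s hs i => by
    simp only [norm_mul, norm_cpow_eq_rpow_re_of_pos (hr i), neg_re, hs, ofReal_re]
  refine isBigO_principal.2 ⟨∑' i, ‖c i * (r i : ℂ) ^ (-(σ : ℂ))‖, fun s hs => ?_⟩
  rw [norm_one, mul_one, ← (hL s hs).tsum_eq]
  exact tsum_of_norm_bounded (hL σ (ofReal_re σ)).summable.norm.hasSum fun i => (hnorm s hs i).le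

theorem hasSum_mellinInv_smul {E : Type*} [NormedAddCommGroup E] [NormedSpace ℂ E] [Countable ι]
    {f : ℂ → E} (hf : VerticalIntegrable f σ) (hr : ∀ i, 0 < r i)
    (hL : ∀ s : ℂ, s.re = σ → HasSum (fun i => c i * (r i : ℂ) ^ (-s)) (L s))
    {t : ℝ} (ht : 0 < t) :
    HasSum (fun i => c i • mellinInv σ f (r i * t)) (mellinInv σ (fun s => L s • f s) t) := by
  set s : ℝ → ℂ := fun y => σ + y * I
  have hs : ∀ y, (s y).re = σ := fun y => by simp [s]
  set g : ℝ → E := fun y => (t : ℂ) ^ (-s y) • f (s y)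
  have hterm : ∀ i, c i • mellinInv σ f (r i * t) =
      (1 / (2 * Real.pi)) • ∫ y, (c i * (r i : ℂ) ^ (-s y)) • g y := fun i => by
    rw [mellinInv, smul_comm (c i), ← integral_smul]
    simp only [ofReal_mul, mul_cpow_ofReal_nonneg (hr i).le ht.le, mul_smul, g, s]
  have hint : ∀ i, Integrable fun y => (c i * (r i : ℂ) ^ (-s y)) • g y := fun i => by
    simp only [mul_smul]
    exact Integrable.fun_smul (c i)
      (verticalIntegrable_cpow_neg_smul (verticalIntegrable_cpow_neg_smul hf ht) (hr i))
  have hnorm : ∀ i, ∫ y, ‖(c i * (r i : ℂ) ^ (-s y)) • g y‖ =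
      ‖c i * (r i : ℂ) ^ (-(σ : ℂ))‖ * ∫ y, ‖g y‖ := fun i => by
    simp only [← integral_const_mul, norm_smul, norm_mul, norm_cpow_eq_rpow_re_of_pos (hr i),
      neg_re, hs, ofReal_re]
  have hsum : ∀ y, HasSum (fun i => (c i * (r i : ℂ) ^ (-s y)) • g y)
      ((t : ℂ) ^ (-s y) • L (s y) • f (s y)) := fun y => by
    rw [smul_comm]
    exact (hL (s y) (hs y)).smul_const _
  have h := hasSum_integral_of_summable_integral_norm hint <| by
    simpa only [hnorm] using (hL σ (ofReal_re σ)).summable.norm.mul_right _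
  simp only [fun y => (hsum y).tsum_eq] at h
  simp only [hterm]
  exact h.const_smul (1 / (2 * Real.pi))

lemma cpow_mul_div_cpow_mul_mul_div_cpow {q r t : ℝ} (hq : 0 < q) (hr : 0 < r) (ht : 0 ≤ t)
    (c w : ℂ) : (q : ℂ) ^ w * (c / (r : ℂ) ^ w) * ((r * t / q : ℝ) : ℂ) ^ w = c * (t : ℂ) ^ w := by
  have hqw : (q : ℂ) ^ w ≠ 0 := by simp [cpow_eq_zero_iff, hq.ne']
  have hrw : (r : ℂ) ^ w ≠ 0 := by simp [cpow_eq_zero_iff, hr.ne']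
  rw [ofReal_div, div_cpow_ofReal_nonneg (mul_nonneg hr.le ht) hq.le, ofReal_mul,
    mul_cpow_ofReal_nonneg hr.le ht]
  field_simp

end GeneralDirichletSeries

section Gamma

open Asymptotics Complex.HadamardThreeLines

lemma norm_Gamma_le_Gamma_re {s : ℂ} (hs : 0 < s.re) : ‖Complex.Gamma s‖ ≤ Real.Gamma s.re := by
  rw [Complex.Gamma_eq_integral hs, Real.Gamma_eq_integral hs, Complex.GammaIntegral]
  refine (norm_integral_le_integral_norm _).trans_eq
    (setIntegral_congr_fun measurableSet_Ioi fun x hx => ?_)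
  simp [Complex.norm_cpow_eq_rpow_re_of_pos (Set.mem_Ioi.1 hx), Complex.norm_exp]

lemma isBigO_one_Gamma_verticalClosedStrip {a : ℝ} (ha : 0 < a) (b : ℝ) :
    Complex.Gamma =O[𝓟 (verticalClosedStrip a b)] fun _ => (1 : ℝ) := by
  have hcont : ContinuousOn Real.Gamma (Set.Icc a b) :=
    Real.differentiableOn_Gamma_Ioi.continuousOn.mono fun x hx => ha.trans_le hx.1
  have hIcc : Real.Gamma =O[𝓟 (Set.Icc a b)] fun _ => (1 : ℝ) :=
    hcont.isBigO_principal isCompact_Icc (by simp)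
  have hGamma : Complex.Gamma =O[𝓟 (verticalClosedStrip a b)] fun s => Real.Gamma s.re :=
    isBigO_principal.2 ⟨1, fun s hs => by
      simpa using (norm_Gamma_le_Gamma_re (ha.trans_le hs.1)).trans (le_abs_self _)⟩
  exact hGamma.trans (hIcc.comp_tendsto (Set.mapsTo_preimage Complex.re _).tendsto)

theorem isRapidlyDecreasingOn_Gamma {a : ℝ} (ha : 0 < a) (b : ℝ) :
    IsRapidlyDecreasingOn Complex.Gamma (verticalClosedStrip a b) := by
  intro N
  induction N generalizing a b with
  | zero => simpa using isBigO_one_Gamma_verticalClosedStrip ha b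
  | succ N ih =>
    have hshift : (fun s => Complex.Gamma (s + 1)) =O[𝓟 (verticalClosedStrip a b)]
        fun s => ((1 + |s.im|) ^ N)⁻¹ := by
      have hmaps : Set.MapsTo (· + (1 : ℂ)) (verticalClosedStrip a b)
          (verticalClosedStrip (a + 1) (b + 1)) := fun s hs => by
        simpa [verticalClosedStrip] using hs
      simpa [Function.comp_def] using (ih (add_pos ha one_pos) (b + 1)).comp_tendsto hmaps.tendsto
    have hinv : (fun s : ℂ => (s + 0)⁻¹) =O[𝓟 (verticalClosedStrip a b)]
        fun s => (1 + |s.im|)⁻¹ :=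
      (isBigO_inv_add_const (by simpa)).mono (principal_mono.2 fun s hs => hs.1)
    refine (hinv.mul hshift).congr' ?_ (by simp [pow_succ', mul_comm])
    filter_upwards [mem_principal_self _] with s hs
    have hne : s ≠ 0 := fun h => by simpa [h] using ha.trans_le hs.1
    rw [Complex.Gamma_add_one s hne, add_zero, inv_mul_cancel_left₀ hne]

end Gamma

namespace SelbergClass

open Complex Asymptotics Complex.HadamardThreeLines

variable (S : SelbergClass)

/-- The product `∏ⱼ Γ(λⱼ s + μⱼ)` of the Gamma factors of `F`. -/
noncomputable def gammaProduct (s : ℂ) : ℂ :=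
  ∏ j, Gamma ((S.lam j : ℂ) * s + S.mu j)

/-- The factor `s^m (1 - s)^m ∏ⱼ Γ(λⱼ s + μⱼ)` by which `ξ_F` differs from the general Dirichlet
series `ε Q^s F(s)`. -/
noncomputable def gammaFactor (s : ℂ) : ℂ :=
  s ^ S.m * (1 - s) ^ S.m * S.gammaProduct s

lemma differentiableAt_gammaProduct {s : ℂ} (hs : 0 < s.re) :
    DifferentiableAt ℂ S.gammaProduct s := by
  refine DifferentiableAt.fun_finsetProd fun j _ => ?_
  have hre : 0 < ((S.lam j : ℂ) * s + S.mu j).re := by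
    rw [add_re, re_ofReal_mul]
    exact add_pos_of_pos_of_nonneg (mul_pos (S.hlam j) hs) (S.hmu j)
  refine (differentiableAt_Gamma _ fun n h => ?_).comp s (by fun_prop)
  rw [h, neg_re, natCast_re] at hre
  linarith [n.cast_nonneg (α := ℝ)]

lemma isRapidlyDecreasingOn_gammaProduct {a : ℝ} (ha : 0 < a) (b : ℝ) :
    IsRapidlyDecreasingOn S.gammaProduct (verticalClosedStrip a b) := by
  have hfactor : ∀ j, IsRapidlyDecreasingOn (fun s => Gamma ((S.lam j : ℂ) * s + S.mu j))
      (verticalClosedStrip a b) := fun j => by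
    have hl := S.hlam j
    refine (isRapidlyDecreasingOn_Gamma (add_pos_of_pos_of_nonneg (mul_pos hl ha) (S.hmu j))
      (S.lam j * b + (S.mu j).re)).comp_affine hl (S.mu j) fun s hs => ?_
    obtain ⟨has, hsb⟩ := hs
    rw [verticalClosedStrip, Set.mem_preimage, add_re, re_ofReal_mul]
    constructor <;> gcongr
  have : NeZero S.k := ⟨Nat.one_le_iff_ne_zero.1 S.hk⟩
  have hprod := Finset.prod_induction_nonempty
    (fun j s => Gamma ((S.lam j : ℂ) * s + S.mu j))
    (fun f => IsRapidlyDecreasingOn f (verticalClosedStrip a b))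
    (fun f g hf hg => hg.smul_of_isBigO_one hf.isBigO_one) Finset.univ_nonempty fun j _ => hfactor j
  convert hprod using 1
  ext s
  simp [gammaProduct]

lemma differentiableOn_gammaFactor {a : ℝ} (ha : 0 < a) (b : ℝ) :
    DifferentiableOn ℂ S.gammaFactor (verticalClosedStrip a b) := fun s hs => by
  have := S.differentiableAt_gammaProduct (ha.trans_le hs.1)
  unfold gammaFactor
  exact DifferentiableAt.differentiableWithinAt (by fun_prop)

lemma isRapidlyDecreasingOn_gammaFactor {a : ℝ} (ha : 0 < a) (b : ℝ) :
    IsRapidlyDecreasingOn S.gammaFactor (verticalClosedStrip a b) := by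
  have hs := (isBigO_add_const_verticalClosedStrip a b 0).pow S.m
  have hs' := (isBigO_add_const_verticalClosedStrip a b (-1)).neg_left.pow S.m
  refine (S.isRapidlyDecreasingOn_gammaProduct ha b).smul_of_isBigO_pow
    (g := fun s => s ^ S.m * (1 - s) ^ S.m) (k := S.m + S.m) ?_
  simpa [pow_add, sub_eq_add_neg, add_comm] using hs.mul hs'

lemma xi_eq_mul_gammaFactor {s : ℂ} (hs : 1 < s.re) :
    S.xi s = S.eps * (S.Q : ℂ) ^ s * S.F s * S.gammaFactor s := by
  rw [S.hxi_eq s hs, gammaFactor, gammaProduct]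
  ring

lemma hasSum_eps_mul_cpow_mul_F {s : ℂ} (hs : 1 < s.re) :
    HasSum (fun n : ℕ => S.eps * S.a (n + 1) * ((((n : ℝ) + 1) / S.Q : ℝ) : ℂ) ^ (-s))
      (S.eps * (S.Q : ℂ) ^ s * S.F s) := by
  refine ((S.hFseries s hs).mul_left (S.eps * (S.Q : ℂ) ^ s)).congr_fun fun n => ?_
  have hn : (0 : ℝ) ≤ (n : ℝ) + 1 := n.cast_add_one_pos.le
  rw [ofReal_div, div_cpow_ofReal_nonneg hn S.hQ.le, cpow_neg (S.Q : ℂ), div_inv_eq_mul]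
  push_cast
  ring

lemma norm_xi_one_sub_conj (s : ℂ) : ‖S.xi (1 - starRingEnd ℂ s)‖ = ‖S.xi s‖ := by
  rw [S.hfe s, RCLike.norm_conj]

lemma xi_eq_of_re_pos {G : ℂ → ℂ} (hG : Differentiable ℂ G)
    (hGF : ∀ s, s ≠ 1 → G s = (s - 1) ^ S.m * S.F s) {s : ℂ} (hs : 0 < s.re) :
    S.xi s = (-s) ^ S.m * S.eps * (S.Q : ℂ) ^ s * S.gammaProduct s * G s := by
  have hopen : ∀ σ : ℝ, IsOpen {s : ℂ | σ < s.re} := fun σ =>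
    isOpen_lt continuous_const continuous_re
  have hright : AnalyticOnNhd ℂ
      (fun s => (-s) ^ S.m * S.eps * (S.Q : ℂ) ^ s * S.gammaProduct s * G s)
      {s : ℂ | 0 < s.re} := by
    refine DifferentiableOn.analyticOnNhd (fun s hs => ?_) (hopen 0)
    have hΓ := S.differentiableAt_gammaProduct hs
    have hQ : DifferentiableAt ℂ (fun s : ℂ => (S.Q : ℂ) ^ s) s :=
      differentiableAt_id.const_cpow (Or.inl (ofReal_ne_zero.2 S.hQ.ne'))
    exact DifferentiableAt.differentiableWithinAt (by fun_prop)
  have hleft := S.hxi_entire.differentiableOn.analyticOnNhd (hopen 0)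
  refine hleft.eqOn_of_preconnected_of_eventuallyEq
    hright (convex_halfSpace_re_gt 0).isPreconnected (z₀ := 2) (by simp) ?_ hs
  filter_upwards [(hopen 1).mem_nhds (show (2 : ℂ) ∈ {s : ℂ | 1 < s.re} by simp)] with s hs
  have hne : s ≠ 1 := fun h => by simp [h] at hs
  rw [S.hxi_eq s hs, hGF s hne, gammaProduct, ← neg_sub s 1, neg_pow s, neg_pow (s - 1)]
  ring

lemma isBigO_xi_exp_norm_sq (b : ℝ) :
    S.xi =O[𝓟 (verticalClosedStrip (1 / 2) b)] fun s => Real.exp (‖s‖ ^ 2) := by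
  obtain ⟨G, hG, hGF, hgrowth⟩ := S.hmero
  obtain ⟨C, hC⟩ := hgrowth 1 one_pos
  have hGexp : G =O[𝓟 (verticalClosedStrip (1 / 2) b)] fun s => Real.exp (‖s‖ ^ 2) :=
    isBigO_principal.2 ⟨C, fun s _ => by
      simpa [one_add_one_eq_two, Real.abs_exp] using hC s⟩
  have hs : (fun s : ℂ => (-s) ^ S.m * S.eps) =O[𝓟 (verticalClosedStrip (1 / 2) b)]
      fun s => (1 + |s.im|) ^ S.m := by
    simpa [mul_comm] using
      ((isBigO_add_const_verticalClosedStrip (1 / 2) b 0).neg_left.pow S.m).const_mul_left S.eps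
  have hcoeff : IsRapidlyDecreasingOn
      (fun s => (-s) ^ S.m * S.eps * (S.Q : ℂ) ^ s * S.gammaProduct s)
      (verticalClosedStrip (1 / 2) b) := by
    refine (S.isRapidlyDecreasingOn_gammaProduct one_half_pos b).smul_of_isBigO_pow
      (g := fun s => (-s) ^ S.m * S.eps * (S.Q : ℂ) ^ s) (k := S.m) ?_
    simpa using hs.mul (isBigO_cpow_verticalClosedStrip S.hQ (1 / 2) b)
  refine (hcoeff.isBigO_one.mul hGexp).congr' ?_ (by simp)
  filter_upwards [mem_principal_self _] with s hs
  exact (S.xi_eq_of_re_pos hG hGF (one_half_pos.trans_le hs.1)).symm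

lemma isBigO_xi_exp_exp_abs_im {σ : ℝ} (hσ : 1 / 2 ≤ σ) {c : ℝ} (hc : 0 < c) :
    S.xi =O[verticalStripInfty (1 - σ) σ] fun s => Real.exp (Real.exp (c * |s.im|)) := by
  have hright : S.xi =O[verticalStripInfty (1 / 2) σ] fun s => Real.exp (Real.exp (c * |s.im|)) :=
    ((S.isBigO_xi_exp_norm_sq σ).mono (verticalStripInfty_le_principal _ _)).trans
      (isBigO_exp_norm_pow_exp_exp_abs_im _ _ 2 hc)
  have hleft : S.xi =O[verticalStripInfty (1 - σ) (1 / 2)]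
      fun s => Real.exp (Real.exp (c * |s.im|)) := by
    have h := hright.comp_tendsto (tendsto_one_sub_conj_verticalStripInfty (1 / 2) σ)
    rw [sub_half] at h
    refine (IsBigO.of_norm_left ?_)
    simpa [Function.comp_def, norm_xi_one_sub_conj] using h.norm_left
  rw [verticalStripInfty_eq_sup (b := 1 / 2) (by linarith) hσ]
  exact hleft.sup hright

lemma isRapidlyDecreasingOn_xi_of_one_lt {σ : ℝ} (hσ : 1 < σ) :
    IsRapidlyDecreasingOn S.xi (re ⁻¹' {σ}) := by
  have hre : ∀ s : ℂ, s ∈ re ⁻¹' {σ} → 1 < s.re := fun s hs => hσ.trans_eq hs.symm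
  have hseries : (fun s => S.eps * (S.Q : ℂ) ^ s * S.F s) =O[𝓟 (re ⁻¹' {σ})] fun _ => (1 : ℝ) :=
    isBigO_one_vertical_line_of_hasSum (fun n => div_pos n.cast_add_one_pos S.hQ)
      fun s hs => S.hasSum_eps_mul_cpow_mul_F (hre s hs)
  have hfactor : IsRapidlyDecreasingOn S.gammaFactor (re ⁻¹' {σ}) :=
    (S.isRapidlyDecreasingOn_gammaFactor (zero_lt_one.trans hσ) σ).mono
      (preimage_re_singleton_subset_verticalClosedStrip (by simp))
  refine fun N => (hfactor.smul_of_isBigO_one hseries N).congr' ?_ EventuallyEq.rfl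
  filter_upwards [mem_principal_self _] with s hs
  exact (S.xi_eq_mul_gammaFactor (hre s hs)).symm

lemma isRapidlyDecreasingOn_xi_verticalClosedStrip {σ : ℝ} (hσ : 1 < σ) :
    IsRapidlyDecreasingOn S.xi (verticalClosedStrip (1 - σ) σ) := by
  have hright := S.isRapidlyDecreasingOn_xi_of_one_lt hσ
  have hleft : IsRapidlyDecreasingOn S.xi (re ⁻¹' {1 - σ}) := fun N => by
    have hmaps : Set.MapsTo (fun s : ℂ => 1 - starRingEnd ℂ s) (re ⁻¹' {1 - σ}) (re ⁻¹' {σ}) :=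
      fun s hs => by simp [show s.re = 1 - σ from hs]
    refine IsBigO.of_norm_left ?_
    simpa [Function.comp_def, norm_xi_one_sub_conj] using
      ((hright N).comp_tendsto hmaps.tendsto).norm_left
  have hwidth : 0 < Real.pi / (σ - (1 - σ)) := div_pos Real.pi_pos (by linarith)
  obtain ⟨c, hc0, hc⟩ := exists_between hwidth
  refine isRapidlyDecreasingOn_verticalClosedStrip_of_edges (by linarith)
    S.hxi_entire.diffContOnCl ⟨c, hc, 1, ?_⟩ hleft hright
  simpa only [one_mul] using S.isBigO_xi_exp_exp_abs_im (by linarith) hc0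

lemma mellinInv_xi_of_one_lt {σ : ℝ} (hσ : 1 < σ) (t : ℝ) :
    mellinInv σ S.xi t =
      mellinInv σ (fun s => (S.eps * (S.Q : ℂ) ^ s * S.F s) • S.gammaFactor s) t := by
  have hline : ∀ y : ℝ, S.xi (σ + y * I) = _ := fun y => S.xi_eq_mul_gammaFactor (by simpa)
  simp only [mellinInv, hline, smul_eq_mul]

theorem hasSum_mellinInv_xi {t : ℝ} (ht : 0 < t) :
    HasSum (fun n : ℕ => S.eps * S.a (n + 1) *
        mellinInv (1 / 2) S.gammaFactor (((n : ℝ) + 1) * t / S.Q))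
      (mellinInv (1 / 2) S.xi t) := by
  have hstrip : verticalClosedStrip (1 / 2) 2 ⊆ verticalClosedStrip (1 - 2) 2 :=
    Set.preimage_mono (Set.Icc_subset_Icc_left (by norm_num))
  have hxi : mellinInv (1 / 2) S.xi t = mellinInv 2 S.xi t :=
    mellinInv_eq_mellinInv_of_isRapidlyDecreasingOn (by norm_num) S.hxi_entire.differentiableOn
      ((S.isRapidlyDecreasingOn_xi_verticalClosedStrip one_lt_two).mono hstrip) ht
  have hr : ∀ n : ℕ, 0 < ((n : ℝ) + 1) / S.Q := fun n => div_pos n.cast_add_one_pos S.hQ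
  have hshift : ∀ n : ℕ, mellinInv (1 / 2) S.gammaFactor (((n : ℝ) + 1) * t / S.Q) =
      mellinInv 2 S.gammaFactor (((n : ℝ) + 1) / S.Q * t) := fun n => by
    rw [mul_div_right_comm]
    exact mellinInv_eq_mellinInv_of_isRapidlyDecreasingOn (by norm_num)
      (S.differentiableOn_gammaFactor one_half_pos 2)
      (S.isRapidlyDecreasingOn_gammaFactor one_half_pos 2) (mul_pos (hr n) ht)
  have hint : VerticalIntegrable S.gammaFactor 2 :=
    (S.isRapidlyDecreasingOn_gammaFactor two_pos 2).verticalIntegrable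
      (S.differentiableOn_gammaFactor two_pos 2).continuousOn
      (preimage_re_singleton_subset_verticalClosedStrip (by simp))
  have hre : ∀ s : ℂ, s.re = 2 → 1 < s.re := fun s hs => by norm_num [hs]
  have h := hasSum_mellinInv_smul hint hr (fun s hs => S.hasSum_eps_mul_cpow_mul_F (hre s hs)) ht
  simp only [hshift, hxi, S.mellinInv_xi_of_one_lt one_lt_two]
  exact h

lemma integrable_xi_half_add_I_mul : Integrable fun z : ℝ => S.xi (1 / 2 + I * z) := by
  have h : VerticalIntegrable S.xi (1 / 2) :=
    (S.isRapidlyDecreasingOn_xi_verticalClosedStrip one_lt_two).verticalIntegrable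
      S.hxi_entire.continuous.continuousOn
      (preimage_re_singleton_subset_verticalClosedStrip (by norm_num))
  simpa [VerticalIntegrable, mul_comm] using h

lemma gammaFactor_half_add_I_mul (z : ℝ) :
    S.gammaFactor (1 / 2 + I * z) = ((1 / 4 + z ^ 2 : ℝ) : ℂ) ^ S.m *
      ∏ j, Gamma (I * (S.lam j : ℂ) * z + S.mu j + (S.lam j : ℂ) / 2) := by
  have hsq : ((1 : ℂ) / 2 + I * z) * (1 - (1 / 2 + I * z)) = ((1 / 4 + z ^ 2 : ℝ) : ℂ) := by
    push_cast
    linear_combination (-(z : ℂ) ^ 2) * I_sq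
  have harg : ∀ j, (S.lam j : ℂ) * (1 / 2 + I * z) + S.mu j =
      I * (S.lam j : ℂ) * z + S.mu j + (S.lam j : ℂ) / 2 := fun j => by ring
  simp only [gammaFactor, gammaProduct, ← mul_pow, hsq, harg]

lemma integral_gammaFactor_eq_mellinInv {r : ℝ} (hr : 0 < r) :
    ∫ z : ℝ, ((1 / 4 + z ^ 2 : ℝ) : ℂ) ^ S.m *
        (∏ j, Gamma (I * (S.lam j : ℂ) * z + S.mu j + (S.lam j : ℂ) / 2)) * (r : ℂ) ^ (-(I * z)) =
      2 * Real.pi * (r : ℂ) ^ ((1 : ℂ) / 2) * mellinInv (1 / 2) S.gammaFactor r := by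
  have h := integral_smul_cpow_neg_I_mul_eq_mellinInv S.gammaFactor (1 / 2) hr
  push_cast at h
  simpa only [gammaFactor_half_add_I_mul, smul_eq_mul, mul_comm ((r : ℂ) ^ (-(I * _)))] using h

end SelbergClass

/-- **The Fourier transform of `Ξ` as an absolutely convergent sum of Gamma integrals**
(equation (2.2) of the paper).  With `Ξ(z) = ξ(1/2 + iz)`, `Ξ` is integrable on `ℝ` and
for every real `x`,
`∫ Ξ(z) e^{-ixz} dz
  = ε Q^{1/2} ∑ₙ (aₙ/n^{1/2}) ∫ (1/4 + z²)^m (∏ Γ(iλⱼz + μⱼ + λⱼ/2)) (n e^x / Q)^{−iz} dz`,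
the sum over `n` converging absolutely (`HasSum` in `ℂ` is absolute convergence). -/
theorem fourier_transform_XiF_as_sum (S : SelbergClass) :
    Integrable (fun z : ℝ => S.xi (1 / 2 + Complex.I * z)) ∧
    ∀ x : ℝ,
      HasSum
        (fun n : ℕ =>
          S.eps * (S.Q : ℂ) ^ ((1 : ℂ) / 2) *
            (S.a (n + 1) / ((n : ℂ) + 1) ^ ((1 : ℂ) / 2)) *
            ∫ z : ℝ, ((1 / 4 + z ^ 2 : ℝ) : ℂ) ^ S.m *
              (∏ j, Complex.Gamma
                (Complex.I * (S.lam j : ℂ) * z + S.mu j + (S.lam j : ℂ) / 2)) *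
              (((((n : ℝ) + 1) * Real.exp x / S.Q : ℝ)) : ℂ) ^ (-(Complex.I * z)))
        (∫ z : ℝ, S.xi (1 / 2 + Complex.I * z) * Complex.exp (-(Complex.I * x * z))) := by
  refine ⟨S.integrable_xi_half_add_I_mul, fun x => ?_⟩
  have hxi : ∫ z : ℝ, S.xi (1 / 2 + Complex.I * z) * Complex.exp (-(Complex.I * x * z)) =
      2 * Real.pi * (Real.exp x : ℂ) ^ ((1 : ℂ) / 2) * mellinInv (1 / 2) S.xi (Real.exp x) := by
    simpa using integral_mul_exp_neg_I_mul_eq_mellinInv S.xi (1 / 2) x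
  rw [hxi]
  refine ((S.hasSum_mellinInv_xi (Real.exp_pos x)).mul_left
    (2 * Real.pi * (Real.exp x : ℂ) ^ ((1 : ℂ) / 2))).congr_fun fun n => ?_
  have hn : (0 : ℝ) < (n : ℝ) + 1 := n.cast_add_one_pos
  have hconst :=
    cpow_mul_div_cpow_mul_mul_div_cpow S.hQ hn (Real.exp_pos x).le (S.a (n + 1)) (1 / 2)
  rw [S.integral_gammaFactor_eq_mellinInv (div_pos (mul_pos hn (Real.exp_pos x)) S.hQ)]
  push_cast at hconst ⊢
  linear_combination (2 * Real.pi * S.eps *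
    mellinInv (1 / 2) S.gammaFactor (((n : ℝ) + 1) * Real.exp x / S.Q)) * hconst
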